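/- Let n ≥ 3 and let x = {d, d̄} ∈ M_n be a pair of centrally symmetric non-diameter diagonals, where d = {a, a+m} with 2 ≤ m ≤ n−1. Then there exists a bijection from the set L(x) = {y ∈ M_n : y ≠ x and y is compatible with x} to the disjoint union of the element set of the type A_{m−2} model and the element set of the type D_{n−m+1} model (where the A_0 model is the empty set) such that: two elements of L(x) mapped into the A-part are compatible iff their images are compatible in the A_{m−2} model; two elements mapped into the D-part are compatible iff their images are compatible in the D_{n−m+1} model; and any element mapped into the A-part is compatible with any element mapped into the D-part. (The link of a symmetric pair is the join of a type A model and a smaller type D model.) -/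

import Mathlib

open Pointwise

namespace GalD

/-- A polytope in `ℝ^d`: the convex hull of a finite set of points. -/
def IsPolytope {d : ℕ} (P : Set (Fin d → ℝ)) : Prop :=
  ∃ V : Finset (Fin d → ℝ), P = convexHull ℝ (V : Set (Fin d → ℝ))

/-- A face of `P`: a nonempty exposed face of `P` (`P` itself included). -/
def IsFaceOf {d : ℕ} (F P : Set (Fin d → ℝ)) : Prop :=
  F.Nonempty ∧ IsExposed ℝ P F

/-- The dimension of a set: the rank of the direction of its affine span. -/
noncomputable def polyDim {d : ℕ} (P : Set (Fin d → ℝ)) : ℕ :=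
  Module.finrank ℝ (affineSpan ℝ P).direction

/-- A facet: a face of dimension `dim P - 1`. -/
def IsFacetOf {d : ℕ} (F P : Set (Fin d → ℝ)) : Prop :=
  IsFaceOf F P ∧ polyDim F + 1 = polyDim P

/-- A vertex: a point spanning a face of dimension 0. -/
def IsVertexOf {d : ℕ} (v : Fin d → ℝ) (P : Set (Fin d → ℝ)) : Prop :=
  IsFaceOf {v} P

/-- A simple polytope: every vertex is contained in exactly `dim P` facets. -/
def IsSimplePolytope {d : ℕ} (P : Set (Fin d → ℝ)) : Prop :=
  IsPolytope P ∧ ∀ v, IsVertexOf v P →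
    {F : Set (Fin d → ℝ) | IsFacetOf F P ∧ v ∈ F}.ncard = polyDim P

/-- A flag polytope: simple, and every collection of pairwise intersecting facets
has a nonempty common intersection. -/
def IsFlagPolytope {d : ℕ} (P : Set (Fin d → ℝ)) : Prop :=
  IsSimplePolytope P ∧
  ∀ 𝒮 : Set (Set (Fin d → ℝ)), 𝒮.Nonempty → (∀ F ∈ 𝒮, IsFacetOf F P) →
    (∀ F ∈ 𝒮, ∀ G ∈ 𝒮, (F ∩ G).Nonempty) → (⋂₀ 𝒮).Nonempty

/-- Combinatorial equivalence: an order isomorphism between the face posets. -/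
def CombEquiv {d₁ d₂ : ℕ} (P : Set (Fin d₁ → ℝ)) (Q : Set (Fin d₂ → ℝ)) : Prop :=
  Nonempty ({F : Set (Fin d₁ → ℝ) // IsFaceOf F P} ≃o
            {G : Set (Fin d₂ → ℝ) // IsFaceOf G Q})

/-- The product of a set in `ℝ^{d₁}` and a set in `ℝ^{d₂}`, inside `ℝ^{d₁+d₂}`. -/
def polyProd {d₁ d₂ : ℕ} (Q : Set (Fin d₁ → ℝ)) (R : Set (Fin d₂ → ℝ)) :
    Set (Fin (d₁ + d₂) → ℝ) :=
  {x | (fun i => x (Fin.castAdd d₂ i)) ∈ Q ∧ (fun j => x (Fin.natAdd d₁ j)) ∈ R}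

/-- `P` is not combinatorially equivalent to a nontrivial product of two polytopes. -/
def Indecomposable {d : ℕ} (P : Set (Fin d → ℝ)) : Prop :=
  ¬ ∃ (d₁ d₂ : ℕ) (Q : Set (Fin d₁ → ℝ)) (R : Set (Fin d₂ → ℝ)),
    IsPolytope Q ∧ IsPolytope R ∧ 1 ≤ polyDim Q ∧ 1 ≤ polyDim R ∧
    CombEquiv P (polyProd Q R)

/-- A building set on the ground set `V`. -/
structure IsBuildingSetOn {m : ℕ} (V : Finset (Fin m)) (B : Finset (Finset (Fin m))) :
    Prop where
  subset_ground : ∀ S ∈ B, S ⊆ V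
  nonempty_mem : ∀ S ∈ B, S.Nonempty
  singleton_mem : ∀ i ∈ V, ({i} : Finset (Fin m)) ∈ B
  ground_mem : V ∈ B
  union_mem : ∀ S₁ ∈ B, ∀ S₂ ∈ B, (S₁ ∩ S₂).Nonempty → S₁ ∪ S₂ ∈ B

/-- A connected building set on `[m]`. -/
def IsConnectedBuildingSet (m : ℕ) (B : Finset (Finset (Fin m))) : Prop :=
  IsBuildingSetOn (Finset.univ : Finset (Fin m)) B

/-- The nestohedron `P_B`: the Minkowski sum of the simplices `Δ_S`, `S ∈ B`. -/
noncomputable def nestohedron (m : ℕ) (B : Finset (Finset (Fin m))) :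
    Set (Fin m → ℝ) :=
  ∑ S ∈ B, convexHull ℝ ((fun i => (Pi.single i 1 : Fin m → ℝ)) '' (S : Set (Fin m)))

/-- A diagonal of a convex `N`-gon with vertices labelled by `ZMod N`. -/
def IsDiag (N : ℕ) (e : Finset (ZMod N)) : Prop :=
  ∃ a b : ZMod N, e = {a, b} ∧ b ≠ a ∧ b ≠ a + 1 ∧ b ≠ a - 1

/-- `c` lies strictly between `a` and `b` on the arc from `a` to `b` (counterclockwise). -/
def StrictBtw (N : ℕ) (a c b : ZMod N) : Prop :=
  0 < (c - a).val ∧ (c - a).val < (b - a).val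

/-- Two diagonals cross: their endpoints alternate around the circle. -/
def Crosses (N : ℕ) (e f : Finset (ZMod N)) : Prop :=
  ∃ a b c d : ZMod N, e = {a, b} ∧ f = {c, d} ∧
    StrictBtw N a c b ∧ StrictBtw N b d a

/-- Image of a diagonal under the central symmetry `a ↦ a + n` of the `2n`-gon. -/
def centralSym (n : ℕ) (e : Finset (ZMod (2 * n))) : Finset (ZMod (2 * n)) :=
  e.image (· + (n : ZMod (2 * n)))

/-- A diameter of the `2n`-gon: a diagonal `{a, a + n}`. -/
def IsDiameter (n : ℕ) (e : Finset (ZMod (2 * n))) : Prop :=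
  ∃ a : ZMod (2 * n), e = {a, a + (n : ZMod (2 * n))}

/-- Raw elements of the type `D_n` model: symmetric pairs of diagonals,
red diameters and blue diameters. -/
inductive DElem (n : ℕ) where
  | pair : Finset (Finset (ZMod (2 * n))) → DElem n
  | red  : Finset (ZMod (2 * n)) → DElem n
  | blue : Finset (ZMod (2 * n)) → DElem n

/-- Membership in the set `M_n` of the type `D_n` model. -/
def memM (n : ℕ) : DElem n → Prop
  | .pair s => ∃ e, IsDiag (2 * n) e ∧ ¬ IsDiameter n e ∧ s = {e, centralSym n e}
  | .red e => IsDiag (2 * n) e ∧ IsDiameter n e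
  | .blue e => IsDiag (2 * n) e ∧ IsDiameter n e

/-- Compatibility of elements of the type `D_n` model. -/
def DCompat (n : ℕ) : DElem n → DElem n → Prop
  | .pair s, .pair t => ∀ e ∈ s, ∀ f ∈ t, ¬ Crosses (2 * n) e f
  | .pair s, .red e => ∀ f ∈ s, ¬ Crosses (2 * n) e f
  | .pair s, .blue e => ∀ f ∈ s, ¬ Crosses (2 * n) e f
  | .red e, .pair s => ∀ f ∈ s, ¬ Crosses (2 * n) e f
  | .blue e, .pair s => ∀ f ∈ s, ¬ Crosses (2 * n) e f
  | .red _, .red _ => True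
  | .blue _, .blue _ => True
  | .red e, .blue f => e = f
  | .blue e, .red f => e = f

/-- The set `M_n` of the type `D_n` model, as a type. -/
def MSet (n : ℕ) := {x : DElem n // memM n x}

/-- `P` realizes the type `D_n` model via the bijection `φ`. -/
def RealizesDWith (n : ℕ) {d : ℕ} (P : Set (Fin d → ℝ))
    (φ : MSet n → Set (Fin d → ℝ)) : Prop :=
  IsPolytope P ∧ IsFlagPolytope P ∧ polyDim P = n ∧
  (∀ x, IsFacetOf (φ x) P) ∧ Function.Injective φ ∧
  (∀ F, IsFacetOf F P → ∃ x, φ x = F) ∧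
  ∀ x y : MSet n, x ≠ y → ((φ x ∩ φ y).Nonempty ↔ DCompat n x.1 y.1)

/-- `P` realizes the type `D_n` model. -/
def RealizesD (n : ℕ) {d : ℕ} (P : Set (Fin d → ℝ)) : Prop :=
  ∃ φ, RealizesDWith n P φ

/-- Elements of the type `A_k` model: diagonals of a convex `(k+3)`-gon. -/
def ASet (k : ℕ) := {e : Finset (ZMod (k + 3)) // IsDiag (k + 3) e}

/-- `P` realizes the type `A_k` model via the bijection `φ`. -/
def RealizesAWith (k : ℕ) {d : ℕ} (P : Set (Fin d → ℝ))
    (φ : ASet k → Set (Fin d → ℝ)) : Prop :=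
  IsPolytope P ∧ IsFlagPolytope P ∧ polyDim P = k ∧
  (∀ x, IsFacetOf (φ x) P) ∧ Function.Injective φ ∧
  (∀ F, IsFacetOf F P → ∃ x, φ x = F) ∧
  ∀ x y : ASet k, x ≠ y → ((φ x ∩ φ y).Nonempty ↔ ¬ Crosses (k + 3) x.1 y.1)

/-- `P` realizes the type `A_k` model. -/
def RealizesA (k : ℕ) {d : ℕ} (P : Set (Fin d → ℝ)) : Prop :=
  ∃ φ, RealizesAWith k P φ

/-- A closed halfspace in `ℝ^d`. -/
def IsClosedHalfspace {d : ℕ} (H : Set (Fin d → ℝ)) : Prop :=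
  ∃ (l : (Fin d → ℝ) →ₗ[ℝ] ℝ) (c : ℝ), l ≠ 0 ∧ H = {x | l x ≤ c}

/-- `P'` is obtained from `P` by shaving off a face of codimension 2. -/
def ObtainedByShaving {d : ℕ} (P P' : Set (Fin d → ℝ)) : Prop :=
  ∃ G H : Set (Fin d → ℝ), IsFaceOf G P ∧ polyDim G + 2 = polyDim P ∧
    IsClosedHalfspace H ∧ G ∩ H = ∅ ∧
    (∀ v, IsVertexOf v P → v ∉ G → v ∈ interior H) ∧ P' = P ∩ H

/-- The restriction `B|_S` of a building set. -/
def restrictBS {m : ℕ} (B : Finset (Finset (Fin m))) (S : Finset (Fin m)) :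
    Finset (Finset (Fin m)) :=
  B.filter (· ⊆ S)

/-- The contraction `B / S` of a building set. -/
def contractBS {m : ℕ} (B : Finset (Finset (Fin m))) (S : Finset (Fin m)) :
    Finset (Finset (Fin m)) :=
  (B.filter (fun S'' => ¬ S'' ⊆ S)).image (fun S'' => S'' \ S)

/-- The subset of the nestohedron `P_B` on which `x ↦ ∑_{i ∈ S} x i` is minimized. -/
def minFace (m : ℕ) (B : Finset (Finset (Fin m))) (S : Finset (Fin m)) :
    Set (Fin m → ℝ) :=
  {x ∈ nestohedron m B | ∀ y ∈ nestohedron m B, ∑ i ∈ S, x i ≤ ∑ i ∈ S, y i}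



/-- Offset of `x` from the base point `p`. -/
def off {N : ℕ} (p x : ZMod N) : ℕ := (x - p).val

lemma off_lt {N : ℕ} [NeZero N] (p x : ZMod N) : off p x < N := ZMod.val_lt _

lemma off_inj {N : ℕ} [NeZero N] (p : ZMod N) {x y : ZMod N} :
    x = y ↔ off p x = off p y := by
  constructor
  · rintro rfl; rfl
  · intro h
    have := ZMod.val_injective N h
    exact sub_left_injective this

lemma off_add {N : ℕ} [NeZero N] (p x : ZMod N) (t : ℕ) (ht : t < N) :
    off p (x + (t : ZMod N)) = if off p x + t < N then off p x + t else off p x + t - N := by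
  have h1 := off_lt p x
  unfold off at *
  rw [show x + (t : ZMod N) - p = (x - p) + t by ring, ZMod.val_add, ZMod.val_natCast_of_lt ht]
  split_ifs with h
  · exact Nat.mod_eq_of_lt h
  · rw [Nat.mod_eq_sub_mod (by omega), Nat.mod_eq_of_lt (by omega)]

lemma off_base {N : ℕ} (p : ZMod N) : off p p = 0 := by simp [off]

lemma off_base_add {N : ℕ} [NeZero N] (p : ZMod N) (t : ℕ) (ht : t < N) :
    off p (p + (t : ZMod N)) = t := by
  rw [off_add _ _ _ ht, off_base]; simp [ht]

lemma off_add_one {N : ℕ} [NeZero N] (p x : ZMod N) (hN : 2 ≤ N) :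
    off p (x + 1) = if off p x + 1 < N then off p x + 1 else 0 := by
  have := off_add p x 1 (by omega)
  have h1 := off_lt p x
  rw [Nat.cast_one] at this
  rw [this]
  split_ifs <;> omega

lemma exists_off {N : ℕ} [NeZero N] (p : ZMod N) (t : ℕ) (ht : t < N) : ∃ x, off p x = t :=
  ⟨_, off_base_add p t ht⟩

lemma sb_iff {N : ℕ} [NeZero N] (p a c b : ZMod N) :
    StrictBtw N a c b ↔ (off p a < off p c ∧ off p c < off p b) ∨
      (off p c < off p b ∧ off p b < off p a) ∨ (off p b < off p a ∧ off p a < off p c) := by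
  have key : ∀ x y : ZMod N, (y - x).val =
      if off p x ≤ off p y then off p y - off p x else N + off p y - off p x := by
    intro x y
    have hx := off_lt p x
    have hy := off_lt p y
    have h0 := off_lt x y
    have hxx : y = x + ((off x y : ℕ) : ZMod N) := by
      unfold off; rw [ZMod.natCast_zmod_val]; ring
    have := off_add p x (off x y) h0
    rw [← hxx] at this
    change off x y = _
    split_ifs at this ⊢ <;> omega
  unfold StrictBtw
  rw [key a c, key a b]
  have ha := off_lt p a
  have hb := off_lt p b
  have hc := off_lt p c
  split_ifs <;> omega

lemma pair_eq {α : Type*} [DecidableEq α] (a b c d : α) :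
    (({a, b} : Finset α) = {c, d}) ↔ (a = c ∧ b = d) ∨ (a = d ∧ b = c) := by
  rw [← Finset.coe_inj]; push_cast; exact Set.pair_eq_pair_iff

lemma diag_iff {N : ℕ} (u v : ZMod N) :
    IsDiag N {u, v} ↔ v ≠ u ∧ v ≠ u + 1 ∧ u ≠ v + 1 := by
  unfold IsDiag
  constructor
  · rintro ⟨a, b, h, h1, h2, h3⟩
    have h3' : a ≠ b + 1 := fun h => h3 (by rw [h]; ring)
    rw [pair_eq] at h
    rcases h with ⟨rfl, rfl⟩ | ⟨rfl, rfl⟩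
    · exact ⟨h1, h2, h3'⟩
    · exact ⟨h1.symm, h3', h2⟩
  · rintro ⟨h1, h2, h3⟩
    exact ⟨u, v, rfl, h1, h2, fun h => h3 (by rw [h]; ring)⟩

lemma cross_iff {N : ℕ} (u v w z : ZMod N) :
    Crosses N {u, v} {w, z} ↔ (StrictBtw N u w v ∧ StrictBtw N v z u) ∨
      (StrictBtw N u z v ∧ StrictBtw N v w u) := by
  unfold Crosses
  constructor
  · rintro ⟨a, b, c, d, h, h', h1, h2⟩
    rw [pair_eq] at h h'
    rcases h with ⟨rfl, rfl⟩ | ⟨rfl, rfl⟩ <;> rcases h' with ⟨rfl, rfl⟩ | ⟨rfl, rfl⟩ <;> tauto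
  · rintro (⟨h1, h2⟩ | ⟨h1, h2⟩)
    · exact ⟨u, v, w, z, rfl, rfl, h1, h2⟩
    · exact ⟨u, v, z, w, rfl, Finset.pair_comm _ _, h1, h2⟩

lemma crosses_comm {N : ℕ} [NeZero N] (e f : Finset (ZMod N)) :
    Crosses N e f ↔ Crosses N f e := by
  have : ∀ e f : Finset (ZMod N), Crosses N e f → Crosses N f e := by
    rintro e f ⟨a, b, c, d, rfl, rfl, h1, h2⟩
    rw [cross_iff]
    simp only [sb_iff 0] at *
    omega
  exact ⟨this _ _, this _ _⟩

/-- Cyclic order embeddings preserve crossing. -/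
lemma crosses_image {N N' : ℕ} (φ : ZMod N → ZMod N') (hφ : Function.Injective φ)
    (h : ∀ a c b, StrictBtw N' (φ a) (φ c) (φ b) ↔ StrictBtw N a c b) (e f : Finset (ZMod N)) :
    Crosses N' (e.image φ) (f.image φ) ↔ Crosses N e f := by
  constructor
  · rintro ⟨a, b, c, d, he, hf, h1, h2⟩
    have key : ∀ (e : Finset (ZMod N)) a b, e.image φ = {a, b} → ∃ i j, a = φ i ∧ b = φ j ∧
        e = {i, j} := by
      intro e a b h
      have ha : a ∈ e.image φ := by rw [h]; simp
      have hb : b ∈ e.image φ := by rw [h]; simp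
      obtain ⟨i, -, rfl⟩ := Finset.mem_image.1 ha
      obtain ⟨j, -, rfl⟩ := Finset.mem_image.1 hb
      refine ⟨i, j, rfl, rfl, Finset.image_injective hφ ?_⟩
      rw [h]; simp [Finset.image_insert]
    obtain ⟨i, j, rfl, rfl, rfl⟩ := key e _ _ he
    obtain ⟨k, l, rfl, rfl, rfl⟩ := key f _ _ hf
    rw [h] at h1 h2
    exact ⟨i, j, k, l, rfl, rfl, h1, h2⟩
  · rintro ⟨a, b, c, d, rfl, rfl, h1, h2⟩
    refine ⟨φ a, φ b, φ c, φ d, ?_, ?_, (h _ _ _).2 h1, (h _ _ _).2 h2⟩ <;>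
      simp [Finset.image_insert]

lemma cS_pair (n : ℕ) (u v : ZMod (2 * n)) :
    centralSym n {u, v} = {u + (n : ZMod (2 * n)), v + (n : ZMod (2 * n))} := by
  simp [centralSym, Finset.image_insert]

lemma cS_cS (n : ℕ) (e : Finset (ZMod (2 * n))) : centralSym n (centralSym n e) = e := by
  unfold centralSym
  rw [Finset.image_image]
  have : ((fun x : ZMod (2 * n) => x + (n : ZMod (2 * n))) ∘ fun x => x + (n : ZMod (2 * n))) = id := by
    funext x
    have : ((2 * n : ℕ) : ZMod (2 * n)) = 0 := ZMod.natCast_self _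
    push_cast at this
    simp only [Function.comp, id]
    linear_combination this
  rw [this, Finset.image_id]

lemma crosses_cS (n : ℕ) (e f : Finset (ZMod (2 * n))) :
    Crosses (2 * n) (centralSym n e) (centralSym n f) ↔ Crosses (2 * n) e f := by
  refine crosses_image _ (add_left_injective _) ?_ e f
  intro a c b
  unfold StrictBtw
  simp

lemma crosses_cS' (n : ℕ) (e f : Finset (ZMod (2 * n))) :
    Crosses (2 * n) (centralSym n e) f ↔ Crosses (2 * n) e (centralSym n f) := by
  rw [← crosses_cS, cS_cS]



lemma off_add' {N : ℕ} [NeZero N] (p x : ZMod N) (t : ℕ) (ht : t < N) :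
    (off p x + t < N ∧ off p (x + (t : ZMod N)) = off p x + t) ∨
    (N ≤ off p x + t ∧ off p (x + (t : ZMod N)) = off p x + t - N) := by
  rw [off_add p x t ht]; split_ifs <;> omega

lemma off_add_one' {N : ℕ} [NeZero N] (p x : ZMod N) (hN : 2 ≤ N) :
    (off p x + 1 < N ∧ off p (x + 1) = off p x + 1) ∨
    (off p x + 1 = N ∧ off p (x + 1) = 0) := by
  have h1 := off_lt p x
  rw [off_add_one p x hN]; split_ifs <;> omega

/-- Embedding of the small `(m+1)`-gon. -/
def fA (n m : ℕ) (a : ZMod (2 * n)) (i : ZMod (m + 1)) : ZMod (2 * n) :=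
  a + ((off 0 i : ℕ) : ZMod (2 * n))

/-- Embedding of the reduced `2k`-gon. -/
def gD (n m k : ℕ) (a : ZMod (2 * n)) (j : ZMod (2 * k)) : ZMod (2 * n) :=
  a + (((if off 0 j < k then off 0 j + m else if off 0 j + 1 < 2 * k then off 0 j + 2 * m - 1
    else 0) : ℕ) : ZMod (2 * n))

section
variable {n m k : ℕ} [NeZero (2 * n)] [NeZero (2 * k)] (hm : 2 ≤ m) (hmn : m + 1 ≤ n)
  (hk : k + m = n + 1) (a : ZMod (2 * n))

lemma off_fA (hmn : m + 1 ≤ n) (i : ZMod (m + 1)) : off a (fA n m a i) = off 0 i := by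
  have := off_lt 0 i
  exact off_base_add _ _ (by omega)

lemma off_gD (hm : 2 ≤ m) (hmn : m + 1 ≤ n) (hk : k + m = n + 1) (j : ZMod (2 * k)) :
    (off 0 j < k ∧ off a (gD n m k a j) = off 0 j + m) ∨
    (k ≤ off 0 j ∧ off 0 j + 1 < 2 * k ∧ off a (gD n m k a j) = off 0 j + 2 * m - 1) ∨
    (off 0 j + 1 = 2 * k ∧ off a (gD n m k a j) = 0) := by
  have h := off_lt 0 j
  unfold gD
  rw [off_base_add]
  · split_ifs <;> omega
  · split_ifs <;> omega

lemma fA_inj (hmn : m + 1 ≤ n) : Function.Injective (fA n m a) := by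
  intro i j h
  rw [off_inj a, off_fA a hmn, off_fA a hmn] at h
  exact (off_inj 0).2 h

lemma gD_inj (hm : 2 ≤ m) (hmn : m + 1 ≤ n) (hk : k + m = n + 1) :
    Function.Injective (gD n m k a) := by
  intro i j h
  rw [off_inj a] at h
  rw [off_inj 0]
  have := off_gD a hm hmn hk i
  have := off_gD a hm hmn hk j
  omega

lemma fA_sb (hmn : m + 1 ≤ n) (i j l : ZMod (m + 1)) :
    StrictBtw (2 * n) (fA n m a i) (fA n m a j) (fA n m a l) ↔ StrictBtw (m + 1) i j l := by
  rw [sb_iff a, sb_iff 0 i, off_fA a hmn, off_fA a hmn, off_fA a hmn]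

/-- a rotation of the base point -/
lemma gD_sb (hm : 2 ≤ m) (hmn : m + 1 ≤ n) (hk : k + m = n + 1) (i j l : ZMod (2 * k)) :
    StrictBtw (2 * n) (gD n m k a i) (gD n m k a j) (gD n m k a l) ↔
      StrictBtw (2 * k) i j l := by
  rw [sb_iff a, sb_iff 0 i]
  have := off_gD a hm hmn hk i
  have := off_gD a hm hmn hk j
  have := off_gD a hm hmn hk l
  omega

lemma gD_add (hm : 2 ≤ m) (hmn : m + 1 ≤ n) (hk : k + m = n + 1) (j : ZMod (2 * k)) :
    gD n m k a (j + (k : ZMod (2 * k))) = gD n m k a j + (n : ZMod (2 * n)) := by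
  rw [off_inj a]
  have := off_gD a hm hmn hk j
  have := off_gD a hm hmn hk (j + (k : ZMod (2 * k)))
  have := off_add' 0 j k (by omega)
  have := off_add' a (gD n m k a j) n (by omega)
  have := off_lt 0 j
  omega

lemma gD_cS (hm : 2 ≤ m) (hmn : m + 1 ≤ n) (hk : k + m = n + 1) (e : Finset (ZMod (2 * k))) :
    (centralSym k e).image (gD n m k a) = centralSym n (e.image (gD n m k a)) := by
  unfold centralSym
  rw [Finset.image_image, Finset.image_image]
  congr 1
  funext j
  exact gD_add a hm hmn hk j

lemma fA_range (hmn : m + 1 ≤ n) (x : ZMod (2 * n)) (hx : off a x ≤ m) :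
    ∃ i, fA n m a i = x := by
  obtain ⟨i, hi⟩ := exists_off (0 : ZMod (m + 1)) (off a x) (by omega)
  exact ⟨i, by rw [off_inj a, off_fA a hmn, hi]⟩

lemma gD_range (hm : 2 ≤ m) (hmn : m + 1 ≤ n) (hk : k + m = n + 1) (x : ZMod (2 * n))
    (hx : off a x = 0 ∨ (m ≤ off a x ∧ off a x ≤ n) ∨ n + m ≤ off a x) :
    ∃ j, gD n m k a j = x := by
  have hlt := off_lt a x
  have : ∃ t, t < 2 * k ∧ ((t < k ∧ off a x = t + m) ∨
    (k ≤ t ∧ t + 1 < 2 * k ∧ off a x = t + 2 * m - 1) ∨ (t + 1 = 2 * k ∧ off a x = 0)) := by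
    rcases hx with h | h | h
    · exact ⟨2 * k - 1, by omega, by omega⟩
    · exact ⟨off a x - m, by omega, by omega⟩
    · exact ⟨off a x + 1 - 2 * m, by omega, by omega⟩
  obtain ⟨t, ht, h⟩ := this
  obtain ⟨j, rfl⟩ := exists_off (0 : ZMod (2 * k)) t ht
  refine ⟨j, ?_⟩
  rw [off_inj a]
  have := off_gD a hm hmn hk j
  omega

lemma fA_diag (hm : 2 ≤ m) (hmn : m + 1 ≤ n) (i j : ZMod (m + 1)) :
    IsDiag (m + 1) {i, j} ↔ IsDiag (2 * n) {fA n m a i, fA n m a j} ∧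
      ({fA n m a i, fA n m a j} : Finset (ZMod (2 * n))) ≠ {a, a + (m : ZMod (2 * n))} := by
  rw [diag_iff, diag_iff]
  simp only [Ne, pair_eq, off_inj (0 : ZMod (m + 1)), off_inj a, off_fA a hmn, off_base,
    off_base_add a m (show m < 2 * n by omega)]
  have h1 := off_add_one' (0 : ZMod (m + 1)) i (by omega)
  have h2 := off_add_one' (0 : ZMod (m + 1)) j (by omega)
  have h3 := off_add_one' a (fA n m a i) (by omega)
  have h4 := off_add_one' a (fA n m a j) (by omega)
  rw [off_fA a hmn] at h3 h4
  have := off_lt 0 i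
  have := off_lt 0 j
  omega

set_option maxHeartbeats 1000000 in
lemma gD_diag (hm : 2 ≤ m) (hmn : m + 1 ≤ n) (hk : k + m = n + 1) (i j : ZMod (2 * k)) :
    IsDiag (2 * k) {i, j} ↔ IsDiag (2 * n) {gD n m k a i, gD n m k a j} ∧
      ({gD n m k a i, gD n m k a j} : Finset (ZMod (2 * n))) ≠ {a, a + (m : ZMod (2 * n))} ∧
      ({gD n m k a i, gD n m k a j} : Finset (ZMod (2 * n))) ≠
        centralSym n {a, a + (m : ZMod (2 * n))} := by
  rw [cS_pair, diag_iff, diag_iff]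
  simp only [Ne, pair_eq, off_inj (0 : ZMod (2 * k)), off_inj a, off_base,
    off_base_add a m (show m < 2 * n by omega), off_base_add a n (show n < 2 * n by omega)]
  have h0 : off a (a + (m : ZMod (2 * n)) + (n : ZMod (2 * n))) = m + n := by
    have h0 := off_add' a (a + (m : ZMod (2 * n))) n (by omega)
    rw [off_base_add a m (show m < 2 * n by omega)] at h0
    omega
  rw [h0]
  have h1 := off_add_one' (0 : ZMod (2 * k)) i (by omega)
  have h2 := off_add_one' (0 : ZMod (2 * k)) j (by omega)
  have h3 := off_add_one' a (gD n m k a i) (by omega)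
  have h4 := off_add_one' a (gD n m k a j) (by omega)
  have hi := off_lt 0 i
  have hj := off_lt 0 j
  have hgi := off_gD a hm hmn hk i
  have hgj := off_gD a hm hmn hk j
  generalize off 0 (i + 1) = i1 at *
  generalize off 0 (j + 1) = j1 at *
  generalize off a (gD n m k a i + 1) = gi1 at *
  generalize off a (gD n m k a j + 1) = gj1 at *
  generalize off a (gD n m k a i) = gi at *
  generalize off a (gD n m k a j) = gj at *
  generalize off 0 i = i0 at *
  generalize off 0 j = j0 at *
  clear h0
  rcases hgi with hgi | hgi | hgi <;> rcases hgj with hgj | hgj | hgj <;>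
    rcases h1 with h1 | h1 <;> rcases h2 with h2 | h2 <;> 
    rcases h3 with h3 | h3 <;> rcases h4 with h4 | h4 <;> 
    first
    | (exfalso; omega)
    | (constructor
       · intro h; refine ⟨?_, ?_, ?_⟩ <;> omega
       · intro h; omega)

lemma not_crosses_of (e f : Finset (ZMod (2 * n))) (he : ∀ x ∈ e, off a x ≤ m)
    (hf : ∀ x ∈ f, off a x = 0 ∨ m ≤ off a x) : ¬ Crosses (2 * n) e f := by
  rintro ⟨u, v, w, z, rfl, rfl, h1, h2⟩
  rw [sb_iff a] at h1 h2
  have := he u (by simp)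
  have := he v (by simp)
  have := hf w (by simp)
  have := hf z (by simp)
  omega

lemma split_of_not_crosses (hmn : m + 1 ≤ n) (u v : ZMod (2 * n))
    (h : ¬ Crosses (2 * n) {a, a + (m : ZMod (2 * n))} {u, v}) :
    (off a u ≤ m ∧ off a v ≤ m) ∨
      ((off a u = 0 ∨ m ≤ off a u) ∧ (off a v = 0 ∨ m ≤ off a v)) := by
  rw [cross_iff] at h
  simp only [sb_iff a, off_base, off_base_add a m (show m < 2 * n by omega)] at h
  omega

lemma diameter_gD (hm : 2 ≤ m) (hmn : m + 1 ≤ n) (hk : k + m = n + 1) (e : Finset (ZMod (2 * k))) :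
    IsDiameter n (e.image (gD n m k a)) ↔ IsDiameter k e := by
  constructor
  · rintro ⟨u, hu⟩
    have : u ∈ e.image (gD n m k a) := by rw [hu]; simp
    obtain ⟨i, -, rfl⟩ := Finset.mem_image.1 this
    refine ⟨i, Finset.image_injective (gD_inj a hm hmn hk) ?_⟩
    rw [hu, Finset.image_insert, Finset.image_singleton, gD_add a hm hmn hk]
  · rintro ⟨i, rfl⟩
    exact ⟨gD n m k a i, by
      rw [Finset.image_insert, Finset.image_singleton, gD_add a hm hmn hk]⟩

lemma not_diameter_fA (hmn : m + 1 ≤ n) (e : Finset (ZMod (m + 1))) :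
    ¬ IsDiameter n (e.image (fA n m a)) := by
  rintro ⟨u, hu⟩
  have h1 : u ∈ e.image (fA n m a) := by rw [hu]; simp
  have h2 : u + (n : ZMod (2 * n)) ∈ e.image (fA n m a) := by rw [hu]; simp
  obtain ⟨i, -, hi⟩ := Finset.mem_image.1 h1
  obtain ⟨j, -, hj⟩ := Finset.mem_image.1 h2
  have := off_add' a u n (by omega)
  rw [← hj, ← hi, off_fA a hmn, off_fA a hmn] at this
  have := off_lt 0 i
  have := off_lt 0 j
  omega

/-- offsets of points of the small polygon -/
lemma fA_le (hmn : m + 1 ≤ n) (e : Finset (ZMod (m + 1))) :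
    ∀ x ∈ e.image (fA n m a), off a x ≤ m := by
  intro x hx
  obtain ⟨i, -, rfl⟩ := Finset.mem_image.1 hx
  rw [off_fA a hmn]
  have := off_lt 0 i
  omega

lemma gD_ge (hm : 2 ≤ m) (hmn : m + 1 ≤ n) (hk : k + m = n + 1) (e : Finset (ZMod (2 * k))) :
    ∀ x ∈ e.image (gD n m k a), off a x = 0 ∨ m ≤ off a x := by
  intro x hx
  obtain ⟨i, -, rfl⟩ := Finset.mem_image.1 hx
  have := off_gD a hm hmn hk i
  omega

lemma cS_ge (hmn : m + 1 ≤ n) (e : Finset (ZMod (2 * n))) (he : ∀ x ∈ e, off a x ≤ m) :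
    ∀ x ∈ centralSym n e, m < off a x := by
  intro x hx
  obtain ⟨i, hi, rfl⟩ := Finset.mem_image.1 hx
  have := he i hi
  have := off_add' a i n (by omega)
  omega

lemma d_le (hmn : m + 1 ≤ n) :
    ∀ x ∈ ({a, a + (m : ZMod (2 * n))} : Finset (ZMod (2 * n))), off a x ≤ m := by
  intro x hx
  simp only [Finset.mem_insert, Finset.mem_singleton] at hx
  rcases hx with rfl | rfl
  · simp [off_base]
  · rw [off_base_add a m (by omega)]

lemma d_ge (hmn : m + 1 ≤ n) :
    ∀ x ∈ ({a, a + (m : ZMod (2 * n))} : Finset (ZMod (2 * n))), off a x = 0 ∨ m ≤ off a x := by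
  intro x hx
  simp only [Finset.mem_insert, Finset.mem_singleton] at hx
  rcases hx with rfl | rfl
  · simp [off_base]
  · rw [off_base_add a m (by omega)]; simp

/-- If the offsets are small on both sides, the symmetric pairs interact only through `e, f`. -/
lemma pair_pair_compat (e f : Finset (ZMod (2 * n))) :
    (∀ x ∈ ({e, centralSym n e} : Finset _), ∀ y ∈ ({f, centralSym n f} : Finset _),
      ¬ Crosses (2 * n) x y) ↔ ¬ Crosses (2 * n) e f ∧ ¬ Crosses (2 * n) e (centralSym n f) := by
  simp only [Finset.mem_insert, Finset.mem_singleton, forall_eq_or_imp, forall_eq,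
    crosses_cS']
  rw [cS_cS]
  tauto

end



lemma diag_form {N : ℕ} {e : Finset (ZMod N)} (h : IsDiag N e) :
    ∃ i j, e = {i, j} := by
  obtain ⟨i, j, h, -⟩ := h
  exact ⟨i, j, h⟩

lemma image_pair {α β : Type*} [DecidableEq α] [DecidableEq β] (f : α → β) (i j : α) :
    ({i, j} : Finset α).image f = {f i, f j} := by
  rw [Finset.image_insert, Finset.image_singleton]

lemma sympair_eq {n : ℕ} {e f : Finset (ZMod (2 * n))}
    (h : ({e, centralSym n e} : Finset _) = {f, centralSym n f}) : e = f ∨ e = centralSym n f := by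
  rw [pair_eq] at h
  tauto

lemma sympair_cS {n : ℕ} (e : Finset (ZMod (2 * n))) :
    ({centralSym n e, centralSym n (centralSym n e)} : Finset _) = {e, centralSym n e} := by
  rw [cS_cS, Finset.pair_comm]

/-- The A-part of the inverse map. -/
def gamA (n m : ℕ) (a : ZMod (2 * n)) (e : Finset (ZMod (m + 1))) : DElem n :=
  .pair {e.image (fA n m a), centralSym n (e.image (fA n m a))}

/-- The D-part of the inverse map. -/
def gamD (n m k : ℕ) (a : ZMod (2 * n)) : DElem k → DElem n
  | .pair s => .pair (s.image (Finset.image (gD n m k a)))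
  | .red e => .red (e.image (gD n m k a))
  | .blue e => .blue (e.image (gD n m k a))

section
variable {n m k : ℕ} [NeZero (2 * n)] [NeZero (2 * k)] (a : ZMod (2 * n))

lemma gamA_mem (hm : 2 ≤ m) (hmn : m + 1 ≤ n) {e : Finset (ZMod (m + 1))}
    (he : IsDiag (m + 1) e) : memM n (gamA n m a e) := by
  refine ⟨_, ?_, not_diameter_fA a hmn e, rfl⟩
  obtain ⟨i, j, rfl⟩ := diag_form he
  rw [image_pair]
  exact ((fA_diag a hm hmn i j).1 he).1

lemma gD_diag_image (hm : 2 ≤ m) (hmn : m + 1 ≤ n) (hk : k + m = n + 1)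
    {e : Finset (ZMod (2 * k))} (he : IsDiag (2 * k) e) :
    IsDiag (2 * n) (e.image (gD n m k a)) ∧
      e.image (gD n m k a) ≠ {a, a + (m : ZMod (2 * n))} ∧
      e.image (gD n m k a) ≠ centralSym n {a, a + (m : ZMod (2 * n))} := by
  obtain ⟨i, j, rfl⟩ := diag_form he
  rw [image_pair]
  exact (gD_diag a hm hmn hk i j).1 he

lemma gamD_pair (hm : 2 ≤ m) (hmn : m + 1 ≤ n) (hk : k + m = n + 1) (e : Finset (ZMod (2 * k))) :
    gamD n m k a (.pair {e, centralSym k e}) =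
      .pair {e.image (gD n m k a), centralSym n (e.image (gD n m k a))} := by
  simp only [gamD, image_pair, gD_cS a hm hmn hk]

lemma gamD_mem (hm : 2 ≤ m) (hmn : m + 1 ≤ n) (hk : k + m = n + 1) {z : DElem k}
    (hz : memM k z) : memM n (gamD n m k a z) := by
  cases z with
  | pair s =>
    obtain ⟨e, he, hd, rfl⟩ := hz
    rw [gamD_pair a hm hmn hk]
    exact ⟨_, (gD_diag_image a hm hmn hk he).1, (diameter_gD a hm hmn hk e).not.2 hd, rfl⟩
  | red e =>
    exact ⟨(gD_diag_image a hm hmn hk hz.1).1, (diameter_gD a hm hmn hk e).2 hz.2⟩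
  | blue e =>
    exact ⟨(gD_diag_image a hm hmn hk hz.1).1, (diameter_gD a hm hmn hk e).2 hz.2⟩

/-- The raw element `x`. -/
def xel (n m : ℕ) (a : ZMod (2 * n)) : DElem n :=
  .pair {({a, a + (m : ZMod (2 * n))} : Finset (ZMod (2 * n))),
        centralSym n {a, a + (m : ZMod (2 * n))}}

lemma fA_ne_cS (hmn : m + 1 ≤ n) {e : Finset (ZMod (m + 1))} (he : IsDiag (m + 1) e)
    (f : Finset (ZMod (2 * n))) (hf : ∀ x ∈ f, off a x ≤ m) :
    e.image (fA n m a) ≠ centralSym n f := by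
  intro h
  obtain ⟨i, j, rfl⟩ := diag_form he
  have h1 : fA n m a i ∈ ({i, j} : Finset (ZMod (m + 1))).image (fA n m a) :=
    Finset.mem_image_of_mem _ (by simp)
  have h2 := fA_le a hmn _ _ h1
  rw [h] at h1
  have := cS_ge a hmn f hf _ h1
  omega

lemma gamA_ne (hm : 2 ≤ m) (hmn : m + 1 ≤ n) {e : Finset (ZMod (m + 1))}
    (he : IsDiag (m + 1) e) : gamA n m a e ≠ xel n m a := by
  intro h
  rcases sympair_eq (DElem.pair.inj h) with h | h
  · obtain ⟨i, j, rfl⟩ := diag_form he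
    rw [image_pair] at h
    exact ((fA_diag a hm hmn i j).1 he).2 h
  · exact fA_ne_cS a hmn he _ (d_le a hmn) h

lemma gamD_ne (hm : 2 ≤ m) (hmn : m + 1 ≤ n) (hk : k + m = n + 1) {z : DElem k}
    (hz : memM k z) : gamD n m k a z ≠ xel n m a := by
  intro h
  cases z with
  | pair s =>
    obtain ⟨e, he, hd, rfl⟩ := hz
    rw [gamD_pair a hm hmn hk] at h
    have := gD_diag_image a hm hmn hk he
    rcases sympair_eq (DElem.pair.inj h) with h | h
    · exact this.2.1 h
    · exact this.2.2 h
  | red e => exact DElem.noConfusion rfl (heq_of_eq h)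
  | blue e => exact DElem.noConfusion rfl (heq_of_eq h)

/-- An arc-supported pair is compatible with everything coming from the D-part. -/
lemma compat_arc (hm : 2 ≤ m) (hmn : m + 1 ≤ n) (hk : k + m = n + 1) {z : DElem k}
    (hz : memM k z) (e : Finset (ZMod (2 * n))) (he : ∀ x ∈ e, off a x ≤ m) :
    DCompat n (.pair {e, centralSym n e}) (gamD n m k a z) := by
  have key : ∀ f : Finset (ZMod (2 * k)), ¬ Crosses (2 * n) e (f.image (gD n m k a)) :=
    fun f => not_crosses_of a _ _ he (gD_ge a hm hmn hk f)
  have key2 : ∀ f : Finset (ZMod (2 * k)), ∀ g ∈ ({e, centralSym n e} : Finset _),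
      ¬ Crosses (2 * n) (f.image (gD n m k a)) g := by
    intro f g hg
    simp only [Finset.mem_insert, Finset.mem_singleton] at hg
    rcases hg with rfl | rfl
    · rw [crosses_comm]; exact key f
    · rw [crosses_comm, crosses_cS', ← gD_cS a hm hmn hk]; exact key _
  cases z with
  | pair s =>
    obtain ⟨f, hf, hd, rfl⟩ := hz
    rw [gamD_pair a hm hmn hk]
    refine (pair_pair_compat _ _).2 ⟨key f, ?_⟩
    rw [← gD_cS a hm hmn hk]; exact key _
  | red f => exact key2 f
  | blue f => exact key2 f

lemma compat_x_A (hmn : m + 1 ≤ n) (e : Finset (ZMod (m + 1))) :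
    DCompat n (xel n m a) (gamA n m a e) := by
  refine (pair_pair_compat _ _).2 ⟨?_, ?_⟩
  · rw [crosses_comm]
    exact not_crosses_of a _ _ (fA_le a hmn e) (d_ge a hmn)
  · exact not_crosses_of a _ _ (d_le a hmn)
      fun x hx => Or.inr (cS_ge a hmn _ (fA_le a hmn e) x hx).le

lemma compat_AA (hmn : m + 1 ≤ n) (e f : Finset (ZMod (m + 1))) :
    DCompat n (gamA n m a e) (gamA n m a f) ↔ ¬ Crosses (m + 1) e f := by
  refine (pair_pair_compat _ _).trans ?_
  rw [crosses_image _ (fA_inj a hmn) (fA_sb a hmn)]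
  refine and_iff_left ?_
  exact not_crosses_of a _ _ (fA_le a hmn e)
      fun x hx => Or.inr (cS_ge a hmn _ (fA_le a hmn f) x hx).le

lemma compat_DD (hm : 2 ≤ m) (hmn : m + 1 ≤ n) (hk : k + m = n + 1) (z w : DElem k) :
    DCompat n (gamD n m k a z) (gamD n m k a w) ↔ DCompat k z w := by
  have key := crosses_image _ (gD_inj a hm hmn hk) (gD_sb a hm hmn hk)
  have hinj := Finset.image_injective (gD_inj a hm hmn hk)
  cases z <;> cases w <;> simp only [gamD, DCompat, Finset.forall_mem_image, key, hinj.eq_iff]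

lemma gamA_inj (hmn : m + 1 ≤ n) {e f : Finset (ZMod (m + 1))} (he : IsDiag (m + 1) e)
    (h : gamA n m a e = gamA n m a f) : e = f := by
  rcases sympair_eq (DElem.pair.inj h) with h | h
  · exact Finset.image_injective (fA_inj a hmn) h
  · exact absurd h (fA_ne_cS a hmn he _ (fA_le a hmn f))

lemma gamD_inj (hm : 2 ≤ m) (hmn : m + 1 ≤ n) (hk : k + m = n + 1) {z w : DElem k}
    (h : gamD n m k a z = gamD n m k a w) : z = w := by
  have hinj := Finset.image_injective (gD_inj a hm hmn hk)
  cases z <;> cases w <;> simp_all [gamD, hinj.eq_iff, (Finset.image_injective hinj).eq_iff]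

lemma gamA_ne_gamD (hm : 2 ≤ m) (hmn : m + 1 ≤ n) (hk : k + m = n + 1)
    {e : Finset (ZMod (m + 1))} (he : IsDiag (m + 1) e)
    {z : DElem k} (hz : memM k z) : gamA n m a e ≠ gamD n m k a z := by
  have main : ∀ f : Finset (ZMod (2 * k)), IsDiag (2 * k) f →
      e.image (fA n m a) ≠ f.image (gD n m k a) := by
    intro f hf h
    obtain ⟨i, j, rfl⟩ := diag_form hf
    have h1 := fA_le a hmn e (gD n m k a i) (by rw [h]; exact Finset.mem_image_of_mem _ (by simp))
    have h2 := fA_le a hmn e (gD n m k a j) (by rw [h]; exact Finset.mem_image_of_mem _ (by simp))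
    rw [diag_iff] at hf
    simp only [Ne, off_inj (0 : ZMod (2 * k))] at hf
    have := off_add_one' (0 : ZMod (2 * k)) i (by omega)
    have := off_add_one' (0 : ZMod (2 * k)) j (by omega)
    have := off_gD a hm hmn hk i
    have := off_gD a hm hmn hk j
    omega
  intro h
  cases z with
  | pair s =>
    have : e.image (fA n m a) ∈ s.image (Finset.image (gD n m k a)) := by
      rw [← DElem.pair.inj h]; simp
    obtain ⟨f, hf, hfe⟩ := Finset.mem_image.1 this
    obtain ⟨f', hf', hd, rfl⟩ := hz
    simp only [Finset.mem_insert, Finset.mem_singleton] at hf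
    rcases hf with rfl | rfl
    · exact main _ hf' hfe.symm
    · refine main _ ?_ hfe.symm
      obtain ⟨i, j, rfl⟩ := diag_form hf'
      rw [cS_pair, diag_iff]
      rw [diag_iff] at hf'
      refine ⟨fun h => hf'.1 (by linear_combination h), fun h => hf'.2.1 (by linear_combination h),
        fun h => hf'.2.2 (by linear_combination h)⟩
  | red e => exact DElem.noConfusion rfl (heq_of_eq h)
  | blue e => exact DElem.noConfusion rfl (heq_of_eq h)

/-- trichotomy for an edge not crossing `d` nor its opposite -/
lemma tri (hm : 2 ≤ m) (hmn : m + 1 ≤ n) (hk : k + m = n + 1) (u v : ZMod (2 * n))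
    (h1 : ¬ Crosses (2 * n) {a, a + (m : ZMod (2 * n))} {u, v})
    (h2 : ¬ Crosses (2 * n) (centralSym n {a, a + (m : ZMod (2 * n))}) {u, v}) :
    (∃ i j, u = fA n m a i ∧ v = fA n m a j) ∨
    (∃ i j, u + (n : ZMod (2 * n)) = fA n m a i ∧ v + (n : ZMod (2 * n)) = fA n m a j) ∨
    (∃ i j, u = gD n m k a i ∧ v = gD n m k a j) := by
  rw [crosses_cS', cS_pair] at h2
  have h1 := split_of_not_crosses a hmn _ _ h1
  have h2 := split_of_not_crosses a hmn _ _ h2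
  rcases h1 with ⟨hu, hv⟩ | h1
  · left
    obtain ⟨i, hi⟩ := fA_range a hmn u hu
    obtain ⟨j, hj⟩ := fA_range a hmn v hv
    exact ⟨i, j, hi.symm, hj.symm⟩
  rcases h2 with ⟨hu, hv⟩ | h2
  · right; left
    obtain ⟨i, hi⟩ := fA_range a hmn _ hu
    obtain ⟨j, hj⟩ := fA_range a hmn _ hv
    exact ⟨i, j, hi.symm, hj.symm⟩
  right; right
  have e1 := off_add' a u n (by omega)
  have e2 := off_add' a v n (by omega)
  have := off_lt a u
  have := off_lt a v
  obtain ⟨i, hi⟩ := gD_range (k := k) a hm hmn hk u (by omega)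
  obtain ⟨j, hj⟩ := gD_range (k := k) a hm hmn hk v (by omega)
  exact ⟨i, j, hi.symm, hj.symm⟩

lemma surj_diameter (hm : 2 ≤ m) (hmn : m + 1 ≤ n) (hk : k + m = n + 1)
    (e : Finset (ZMod (2 * n))) (he : IsDiameter n e)
    (h : ∀ f ∈ ({({a, a + (m : ZMod (2 * n))} : Finset (ZMod (2 * n))),
        centralSym n {a, a + (m : ZMod (2 * n))}} : Finset _), ¬ Crosses (2 * n) e f) :
    ∃ e' : Finset (ZMod (2 * k)), IsDiag (2 * k) e' ∧ IsDiameter k e' ∧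
      e'.image (gD n m k a) = e := by
  have hd := he
  obtain ⟨u, rfl⟩ := he
  simp only [Finset.mem_insert, Finset.mem_singleton, forall_eq_or_imp, forall_eq] at h
  rw [crosses_comm, crosses_comm _ (centralSym _ _)] at h
  have e1 := off_add' a u n (by omega)
  have e2 := off_add' a (u + (n : ZMod (2 * n))) n (by omega)
  rcases tri (k := k) a hm hmn hk _ _ h.1 h.2 with ⟨i, j, hi, hj⟩ | ⟨i, j, hi, hj⟩ | ⟨i, j, hi, hj⟩
  · rw [hj, hi, off_fA a hmn, off_fA a hmn] at e1
    have := off_lt 0 i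
    have := off_lt 0 j
    omega
  · rw [hj, hi, off_fA a hmn, off_fA a hmn] at e2
    have := off_lt 0 i
    have := off_lt 0 j
    omega
  · have himg : ({i, j} : Finset (ZMod (2 * k))).image (gD n m k a) =
      {u, u + (n : ZMod (2 * n))} := by rw [image_pair, ← hi, ← hj]
    have hdk : IsDiameter k {i, j} := by
      rw [← diameter_gD a hm hmn hk, himg]; exact hd
    refine ⟨{i, j}, ?_, hdk, himg⟩
    obtain ⟨l, hl⟩ := hdk
    rw [hl, diag_iff]
    simp only [Ne, off_inj (0 : ZMod (2 * k))]
    have := off_add_one' (0 : ZMod (2 * k)) l (by omega)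
    have := off_add_one' (0 : ZMod (2 * k)) (l + (k : ZMod (2 * k))) (by omega)
    have := off_add' (0 : ZMod (2 * k)) l k (by omega)
    have := off_lt 0 l
    omega

lemma gam_surj (hm : 2 ≤ m) (hmn : m + 1 ≤ n) (hk : k + m = n + 1) (y : DElem n) (hy : memM n y)
    (hne : y ≠ xel n m a) (hc : DCompat n (xel n m a) y) :
    (∃ e, IsDiag (m + 1) e ∧ gamA n m a e = y) ∨ (∃ z, memM k z ∧ gamD n m k a z = y) := by
  cases y with
  | red e =>
    obtain ⟨e', h1, h2, h3⟩ := surj_diameter a hm hmn hk e hy.2 hc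
    exact Or.inr ⟨.red e', ⟨h1, h2⟩, by simp only [gamD, h3]⟩
  | blue e =>
    obtain ⟨e', h1, h2, h3⟩ := surj_diameter a hm hmn hk e hy.2 hc
    exact Or.inr ⟨.blue e', ⟨h1, h2⟩, by simp only [gamD, h3]⟩
  | pair s =>
    obtain ⟨e, he, hd, rfl⟩ := hy
    have hn1 : e ≠ {a, a + (m : ZMod (2 * n))} := by
      rintro rfl; exact hne rfl
    have hn2 : e ≠ centralSym n {a, a + (m : ZMod (2 * n))} := by
      rintro rfl; exact hne (by rw [sympair_cS]; rfl)
    have hc1 := hc {a, a + (m : ZMod (2 * n))} (by simp) e (by simp)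
    have hc2 := hc (centralSym n {a, a + (m : ZMod (2 * n))}) (by simp) e (by simp)
    obtain ⟨u, v, rfl⟩ := diag_form he
    rcases tri (k := k) a hm hmn hk _ _ hc1 hc2 with
      ⟨i, j, rfl, rfl⟩ | ⟨i, j, hi, hj⟩ | ⟨i, j, rfl, rfl⟩
    · left
      refine ⟨{i, j}, (fA_diag a hm hmn i j).2 ⟨he, hn1⟩, ?_⟩
      rw [gamA, image_pair]
    · left
      have himg : ({i, j} : Finset (ZMod (m + 1))).image (fA n m a) = centralSym n {u, v} := by
        rw [cS_pair, image_pair, hi, hj]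
      refine ⟨{i, j}, (fA_diag a hm hmn i j).2 ⟨?_, ?_⟩, ?_⟩
      · rw [← image_pair, himg, cS_pair, diag_iff]
        rw [diag_iff] at he
        exact ⟨fun h => he.1 (by linear_combination h), fun h => he.2.1 (by linear_combination h),
          fun h => he.2.2 (by linear_combination h)⟩
      · rw [← image_pair, himg]
        intro h
        apply hn2
        rw [← h, cS_cS]
      · rw [gamA, himg, sympair_cS]
    · right
      refine ⟨.pair {{i, j}, centralSym k {i, j}}, ⟨{i, j},
        (gD_diag a hm hmn hk i j).2 ⟨he, hn1, hn2⟩, ?_, rfl⟩, ?_⟩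
      · rw [← diameter_gD a hm hmn hk, image_pair]; exact hd
      · rw [gamD_pair a hm hmn hk, image_pair]

end

/-- The inverse map. -/
def gam {n m k : ℕ} [NeZero (2 * n)] [NeZero (2 * k)] (a : ZMod (2 * n)) (hm : 2 ≤ m)
    (hmn : m + 1 ≤ n) (hk : k + m = n + 1) (x : MSet n) (hx : x.1 = xel n m a) :
    ({e : Finset (ZMod (m + 1)) // IsDiag (m + 1) e} ⊕ MSet k) →
      {y : MSet n // y ≠ x ∧ DCompat n x.1 y.1}
  | .inl e => ⟨⟨gamA n m a e.1, gamA_mem a hm hmn e.2⟩,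
      fun h => gamA_ne a hm hmn e.2 ((congrArg Subtype.val h).trans hx),
      by rw [hx]; exact compat_x_A a hmn e.1⟩
  | .inr z => ⟨⟨gamD n m k a z.1, gamD_mem a hm hmn hk z.2⟩,
      fun h => gamD_ne a hm hmn hk z.2 ((congrArg Subtype.val h).trans hx),
      by rw [hx]; exact compat_arc a hm hmn hk z.2 _ (d_le a hmn)⟩

lemma gam_bij {n m k : ℕ} [NeZero (2 * n)] [NeZero (2 * k)] (a : ZMod (2 * n)) (hm : 2 ≤ m)
    (hmn : m + 1 ≤ n) (hk : k + m = n + 1) (x : MSet n) (hx : x.1 = xel n m a) :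
    Function.Bijective (gam a hm hmn hk x hx) := by
  constructor
  · rintro (e | z) (f | w) h
    · exact congrArg _ (Subtype.ext (gamA_inj a hmn e.2
        (congrArg (fun y => y.1.1) h)))
    · exact absurd (congrArg (fun y => y.1.1) h) (gamA_ne_gamD a hm hmn hk e.2 w.2)
    · exact absurd (congrArg (fun y => y.1.1) h).symm (gamA_ne_gamD a hm hmn hk f.2 z.2)
    · exact congrArg _ (Subtype.ext (gamD_inj a hm hmn hk
        (congrArg (fun y => y.1.1) h)))
  · rintro ⟨⟨y, hy⟩, hne, hc⟩
    rcases gam_surj a hm hmn hk y hy (fun h => hne (Subtype.ext (h.trans hx.symm)))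
      (by rw [← hx]; exact hc) with ⟨e, he, rfl⟩ | ⟨z, hz, rfl⟩
    · exact ⟨.inl ⟨e, he⟩, rfl⟩
    · exact ⟨.inr ⟨z, hz⟩, rfl⟩

/-- the link of a symmetric pair `x = {d, d̄}`, `d = {a, a+m}`,
`2 ≤ m ≤ n-1`, is the join of the type `A_{m-2}` model (the diagonals of an
`(m+1)`-gon, empty for `m = 2`) and the type `D_{n-m+1}` model. -/
theorem link_of_pair (n : ℕ) (hn : 3 ≤ n) (m : ℕ) (hm2 : 2 ≤ m) (hmn : m ≤ n - 1)
    (a : ZMod (2 * n)) (x : MSet n)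
    (hx : x.1 = DElem.pair
      {({a, a + (m : ZMod (2 * n))} : Finset (ZMod (2 * n))),
        centralSym n {a, a + (m : ZMod (2 * n))}}) :
    ∃ β : {y : MSet n // y ≠ x ∧ DCompat n x.1 y.1} ≃
          ({e : Finset (ZMod (m + 1)) // IsDiag (m + 1) e} ⊕ MSet (n - m + 1)),
      (∀ y₁ y₂ e₁ e₂, y₁ ≠ y₂ → β y₁ = Sum.inl e₁ → β y₂ = Sum.inl e₂ →
        (DCompat n y₁.1.1 y₂.1.1 ↔ ¬ Crosses (m + 1) e₁.1 e₂.1)) ∧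
      (∀ y₁ y₂ z₁ z₂, y₁ ≠ y₂ → β y₁ = Sum.inr z₁ → β y₂ = Sum.inr z₂ →
        (DCompat n y₁.1.1 y₂.1.1 ↔ DCompat (n - m + 1) z₁.1 z₂.1)) ∧
      (∀ y₁ y₂ e z, β y₁ = Sum.inl e → β y₂ = Sum.inr z →
        DCompat n y₁.1.1 y₂.1.1) := by
  haveI : NeZero (2 * n) := ⟨by omega⟩
  haveI : NeZero (2 * (n - m + 1)) := ⟨by omega⟩
  have hmn' : m + 1 ≤ n := by omega
  have hk : (n - m + 1) + m = n + 1 := by omega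
  let γ := Equiv.ofBijective _ (gam_bij a hm2 hmn' hk x hx)
  have hγ : ∀ y w, γ.symm y = w → y = gam a hm2 hmn' hk x hx w := by
    intro y w h
    exact (Equiv.symm_apply_eq γ).1 h
  refine ⟨γ.symm, ?_, ?_, ?_⟩
  · intro y₁ y₂ e₁ e₂ _ h₁ h₂
    rw [hγ _ _ h₁, hγ _ _ h₂]
    exact compat_AA a hmn' e₁.1 e₂.1
  · intro y₁ y₂ z₁ z₂ _ h₁ h₂
    rw [hγ _ _ h₁, hγ _ _ h₂]
    exact compat_DD a hm2 hmn' hk z₁.1 z₂.1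
  · intro y₁ y₂ e z h₁ h₂
    rw [hγ _ _ h₁, hγ _ _ h₂]
    exact compat_arc a hm2 hmn' hk z.2 _ (fA_le a hmn' e.1)

end GalD
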